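/- arXiv:2604.25643 — 3 statements merged into one kernel-verified Lean document; each statement's English description precedes it below -/
import Mathlib

section
/- Let j ≥ 1, u ∈ C^{j+1}(ℝⁿ; ℝ) and f ∈ C^{j}(ℝⁿ; ℝⁿ). Then for every ξ ∈ ℝⁿ, D^j( x ↦ ∇u(x)ᵀ f(x) )(ξ) = Σ_{i=0}^{j} Sym_{i,j−i}( D^{i+1} u(ξ) *_{1,1} D^{j−i} f(ξ) ), where ∇u denotes the gradient of u, so that D^i(∇u) = D^{i+1} u as tensors. -/
open scoped BigOperators

/-- The set `S_{i,j}` of `(i,j)`-shuffles, realized as the permutations of `Fin k`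
(with `k = i + j`) that are strictly increasing on the first `i` positions and on the
remaining positions. -/
def shuffles (k i : ℕ) : Finset (Equiv.Perm (Fin k)) :=
  Finset.univ.filter fun σ =>
    (∀ a b : Fin k, a < b → (b : ℕ) < i → σ a < σ b) ∧
    (∀ a b : Fin k, a < b → i ≤ (a : ℕ) → σ a < σ b)

/-- Entry of the order-`k` derivative tensor of `u : ℝⁿ → ℝ` at `ξ`. -/
noncomputable def Dt (n k : ℕ) (u : (Fin n → ℝ) → ℝ) (ξ : Fin n → ℝ)
    (idx : Fin k → Fin n) : ℝ :=
  iteratedFDeriv ℝ k u ξ fun r => Pi.single (idx r) 1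

/-- Inclusion of the first block `{0, …, i-1}` into `Fin k`. -/
def finL {k : ℕ} (i : ℕ) (h : i ≤ k) (r : Fin i) : Fin k := Fin.castLE h r

/-- Inclusion of the second block into `Fin k`, shifting by `i`. -/
def finR {k : ℕ} (i : ℕ) {l : ℕ} (h : i + l = k) (r : Fin l) : Fin k :=
  ⟨i + r.1, by have := r.2; omega⟩

/-!
Differentiating a bilinear expression `B (a x) (b x)` along `k` directions distributes the
directions over the two factors, so the result is a sum over the subsets of directions that fall
on `a`. Subsets of size `i` correspond to `(i, k - i)`-shuffles: the shuffle enumerates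
increasingly first the subset, then its complement. For the evaluation pairing of `Du` with `f`,
this yields `D^{i+1} u` with the contracted slot last, and symmetry of higher derivatives moves it
to the front.
-/

section Shuffles

open Finset

variable {k i l : ℕ}

theorem exists_finR_eq (h : i + l = k) {a : Fin k} (ha : i ≤ a) : ∃ r, finR i h r = a :=
  ⟨⟨a - i, by omega⟩, Fin.ext (Nat.add_sub_of_le ha)⟩

theorem exists_finL_eq_or_exists_finR_eq (h : i + l = k) (a : Fin k) :
    (∃ r, finL i (Nat.le.intro h) r = a) ∨ ∃ r, finR i h r = a :=
  (lt_or_ge (a : ℕ) i).imp (fun ha => ⟨⟨a, ha⟩, rfl⟩) (exists_finR_eq h)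

theorem finL_ne_finR (h : i + l = k) (r : Fin i) (r' : Fin l) :
    finL i (Nat.le.intro h) r ≠ finR i h r' :=
  Fin.ne_of_lt (r.isLt.trans_le (Nat.le_add_right i r'))

theorem mem_shuffles_iff_strictMono (h : i + l = k) {σ : Equiv.Perm (Fin k)} :
    σ ∈ shuffles k i ↔
      StrictMono (σ ∘ finL i (Nat.le.intro h)) ∧ StrictMono (σ ∘ finR i h) := by
  simp only [shuffles, mem_filter_univ]
  refine and_congr ⟨fun hσ a b hab => hσ _ _ hab b.isLt, fun hσ a b hab hb => ?_⟩
    ⟨fun hσ a b hab => hσ _ _ (Nat.add_lt_add_left hab i) (Nat.le_add_right i a),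
      fun hσ a b hab ha => ?_⟩
  · exact hσ (a := ⟨a, lt_trans (Fin.lt_def.1 hab) hb⟩) (b := ⟨b, hb⟩) hab
  · obtain ⟨r, rfl⟩ := exists_finR_eq h ha
    obtain ⟨r', rfl⟩ := exists_finR_eq h (ha.trans (Fin.le_def.1 hab.le))
    exact hσ (Nat.lt_of_add_lt_add_left hab)

theorem compl_image_finL (h : i + l = k) (σ : Equiv.Perm (Fin k)) :
    (univ.image (σ ∘ finL i (Nat.le.intro h)))ᶜ = univ.image (σ ∘ finR i h) := by
  ext x
  obtain ⟨a, rfl⟩ := σ.surjective x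
  obtain ⟨r, rfl⟩ | ⟨r, rfl⟩ := exists_finL_eq_or_exists_finR_eq h a
  · simp [(finL_ne_finR h r _).symm]
  · simp [finL_ne_finR h _ r]

theorem eq_of_strictMono_of_image_univ_eq {α : Type*} [LinearOrder α] {m : ℕ} {g g' : Fin m → α}
    (hg : StrictMono g) (hg' : StrictMono g') (h : univ.image g = univ.image g') : g = g' := by
  simpa [← coe_inj, hg.range_inj hg'] using h

theorem image_finL_injOn_shuffles (h : i + l = k) :
    Set.InjOn (fun σ : Equiv.Perm (Fin k) => univ.image (σ ∘ finL i (Nat.le.intro h)))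
      (shuffles k i) := by
  intro σ hσ τ hτ hστ
  obtain ⟨hσL, hσR⟩ := (mem_shuffles_iff_strictMono h).1 hσ
  obtain ⟨hτL, hτR⟩ := (mem_shuffles_iff_strictMono h).1 hτ
  have hL : σ ∘ finL i _ = τ ∘ finL i _ :=
    eq_of_strictMono_of_image_univ_eq hσL hτL hστ
  have hR : σ ∘ finR i h = τ ∘ finR i h := by
    have hcompl := congrArg compl hστ
    simp only [compl_image_finL h] at hcompl
    exact eq_of_strictMono_of_image_univ_eq hσR hτR hcompl
  ext1 a
  obtain ⟨r, rfl⟩ | ⟨r, rfl⟩ := exists_finL_eq_or_exists_finR_eq h a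
  exacts [congrFun hL r, congrFun hR r]

theorem exists_mem_shuffles_image_finL_eq (h : i + l = k) {s : Finset (Fin k)} (hs : #s = i) :
    ∃ σ ∈ shuffles k i, univ.image (σ ∘ finL i (Nat.le.intro h)) = s := by
  have hsc : #sᶜ = l := by simp [card_compl, hs, ← h]
  subst h
  let σ : Equiv.Perm (Fin (i + l)) := finSumFinEquiv.symm.trans (finSumEquivOfFinset hs hsc)
  have hL : σ ∘ finL i (Nat.le.intro rfl) = s.orderEmbOfFin hs :=
    funext fun r => congrArg (finSumEquivOfFinset hs hsc) (finSumFinEquiv_symm_apply_castAdd r)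
  have hR : σ ∘ finR i rfl = sᶜ.orderEmbOfFin hsc :=
    funext fun r => congrArg (finSumEquivOfFinset hs hsc) (finSumFinEquiv_symm_apply_natAdd r)
  refine ⟨σ, (mem_shuffles_iff_strictMono rfl).2 ?_, ?_⟩
  · rw [hL, hR]
    exact ⟨OrderEmbedding.strictMono _, OrderEmbedding.strictMono _⟩
  · rw [hL, image_orderEmbOfFin_univ]

theorem sum_shuffles_image_finL {M : Type*} [AddCommMonoid M] (h : i + l = k)
    (F : Finset (Fin k) → M) :
    ∑ σ ∈ shuffles k i, F (univ.image (σ ∘ finL i (Nat.le.intro h))) =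
      ∑ s ∈ powersetCard i univ, F s := by
  refine sum_nbij (fun σ => univ.image (σ ∘ finL i (Nat.le.intro h))) (fun σ hσ => ?_)
    (image_finL_injOn_shuffles h) (fun s hs => ?_) fun _ _ => rfl
  · rw [mem_powersetCard_univ,
      card_image_of_injective _ ((mem_shuffles_iff_strictMono h).1 hσ).1.injective, card_fin]
  · exact exists_mem_shuffles_image_finL_eq h (mem_powersetCard_univ.1 hs)

theorem sum_finset_eq_sum_shuffles {M : Type*} [AddCommMonoid M] (F : Finset (Fin k) → M) :
    ∑ s, F s = ∑ i : Fin (k + 1), ∑ σ ∈ shuffles k i,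
      F (univ.image (σ ∘ finL i i.is_le)) := by
  rw [← powerset_univ, sum_powerset, card_fin, sum_range]
  exact sum_congr rfl fun i _ =>
    (sum_shuffles_image_finL (Nat.add_sub_of_le i.is_le) F).symm

end Shuffles

section Derivatives

variable {𝕜 E F G H : Type*} [NontriviallyNormedField 𝕜]
  [NormedAddCommGroup E] [NormedSpace 𝕜 E] [NormedAddCommGroup F] [NormedSpace 𝕜 F]
  [NormedAddCommGroup G] [NormedSpace 𝕜 G] [NormedAddCommGroup H] [NormedSpace 𝕜 H]

section Leibniz

open Finset
open scoped Topology

variable {ι : Type*} [LinearOrder ι] {s : Finset ι} {v : ι → E} {f : E → F} {x : E}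

variable (𝕜) in
/-- The derivative of `f` at `x` along the directions `v r`, `r ∈ s`, in increasing order of `r`.
Fixing the order makes the notion meaningful without assuming that derivatives commute. -/
noncomputable def iteratedFDerivAlong (s : Finset ι) (v : ι → E) (f : E → F) (x : E) : F :=
  iteratedFDeriv 𝕜 #s f x (v ∘ s.orderEmbOfFin rfl)

theorem iteratedFDerivAlong_image {m : ℕ} {g : Fin m → ι} (hg : StrictMono g) :
    iteratedFDerivAlong 𝕜 (univ.image g) v f x = iteratedFDeriv 𝕜 m f x (v ∘ g) := by
  have hmem : ∀ r, g r ∈ univ.image g := fun r => mem_image_of_mem g (mem_univ r)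
  have hcard : #(univ.image g) = m := by rw [card_image_of_injective _ hg.injective, card_fin]
  generalize univ.image g = s at hmem hcard
  subst hcard
  rw [iteratedFDerivAlong, ← orderEmbOfFin_unique rfl hmem hg]

theorem iteratedFDerivAlong_empty : iteratedFDerivAlong 𝕜 ∅ v f x = f x :=
  iteratedFDeriv_zero_apply _

theorem iteratedFDerivAlong_univ {k : ℕ} {v : Fin k → E} :
    iteratedFDerivAlong 𝕜 univ v f x = iteratedFDeriv 𝕜 k f x v := by
  rw [← image_id (s := univ), iteratedFDerivAlong_image strictMono_id, Function.comp_id]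

theorem differentiableAt_iteratedFDerivAlong {n : ℕ} (hf : ContDiffAt 𝕜 n f x) (hs : #s < n) :
    DifferentiableAt 𝕜 (iteratedFDerivAlong 𝕜 s v f) x :=
  (hf.differentiableAt_iteratedFDeriv (Nat.cast_lt.2 hs)).continuousMultilinear_apply_const _

theorem iteratedFDerivAlong_insert {n : ℕ} {a : ι} (ha : ∀ b ∈ s, a < b)
    (hf : ContDiffAt 𝕜 n f x) (hs : #s < n) :
    iteratedFDerivAlong 𝕜 (insert a s) v f x = fderiv 𝕜 (iteratedFDerivAlong 𝕜 s v f) x (v a) := by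
  let g : Fin (#s + 1) → ι := Fin.cons a (s.orderEmbOfFin rfl)
  have hg : StrictMono g :=
    Fin.strictMono_cons.2 ⟨fun _ => ha _ (orderEmbOfFin_mem _ _ _), OrderEmbedding.strictMono _⟩
  have hgs : univ.image g = insert a s := by
    simp [g, ← coe_inj, Fin.range_cons]
  rw [← hgs, iteratedFDerivAlong_image hg,
    (hf.differentiableAt_iteratedFDeriv (Nat.cast_lt.2 hs)).iteratedFDeriv_succ_apply_left']
  rfl

theorem fderiv_bilinear_iteratedFDerivAlong (B : F →L[𝕜] G →L[𝕜] H) {a : E → F} {b : E → G}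
    {n : ℕ} (ha : ContDiffAt 𝕜 n a x) (hb : ContDiffAt 𝕜 n b x) {r : ι} {t : Finset ι}
    (hrs : ∀ q ∈ s, r < q) (hs : #s < n) (hrt : ∀ q ∈ t, r < q) (ht : #t < n) :
    fderiv 𝕜 (fun y => B (iteratedFDerivAlong 𝕜 s v a y) (iteratedFDerivAlong 𝕜 t v b y)) x (v r) =
      B (iteratedFDerivAlong 𝕜 s v a x) (iteratedFDerivAlong 𝕜 (insert r t) v b x) +
        B (iteratedFDerivAlong 𝕜 (insert r s) v a x) (iteratedFDerivAlong 𝕜 t v b x) := by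
  rw [B.fderiv_of_bilinear (differentiableAt_iteratedFDerivAlong ha hs)
      (differentiableAt_iteratedFDerivAlong hb ht),
    iteratedFDerivAlong_insert hrs ha hs, iteratedFDerivAlong_insert hrt hb ht]
  rfl

theorem iteratedFDerivAlong_bilinear (B : F →L[𝕜] G →L[𝕜] H) {a : E → F} {b : E → G}
    {n : ℕ} (ha : ContDiffAt 𝕜 n a x) (hb : ContDiffAt 𝕜 n b x) (hs : #s ≤ n) :
    iteratedFDerivAlong 𝕜 s v (fun y => B (a y) (b y)) x =
      ∑ t ∈ s.powerset,
        B (iteratedFDerivAlong 𝕜 t v a x) (iteratedFDerivAlong 𝕜 (s \ t) v b x) := by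
  induction s using Finset.induction_on_min generalizing x with
  | empty => simp [iteratedFDerivAlong_empty]
  | insert r s hr ih =>
    have hrs : r ∉ s := fun h => (hr r h).false
    have hsn : #s < n := by rwa [card_insert_of_notMem hrs] at hs
    have hcard {t : Finset ι} (ht : t ⊆ s) : #t < n := (card_le_card ht).trans_lt hsn
    have ih_near : iteratedFDerivAlong 𝕜 s v (fun y => B (a y) (b y)) =ᶠ[𝓝 x] fun y =>
        ∑ t ∈ s.powerset,
          B (iteratedFDerivAlong 𝕜 t v a y) (iteratedFDerivAlong 𝕜 (s \ t) v b y) := by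
      filter_upwards [ha.eventually (by simp), hb.eventually (by simp)] with y hay hby
      exact ih hay hby hsn.le
    have hB : ContDiffAt 𝕜 n (fun y => B (a y) (b y)) x :=
      B.isBoundedBilinearMap.contDiff.contDiffAt.comp x (ha.prodMk hb)
    have hterm (t : Finset ι) (ht : t ∈ s.powerset) : DifferentiableAt 𝕜
        (fun y => B (iteratedFDerivAlong 𝕜 t v a y) (iteratedFDerivAlong 𝕜 (s \ t) v b y)) x :=
      (B.hasFDerivAt_of_bilinear
        (differentiableAt_iteratedFDerivAlong ha (hcard (mem_powerset.1 ht))).hasFDerivAt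
        (differentiableAt_iteratedFDerivAlong hb (hcard sdiff_subset)).hasFDerivAt).differentiableAt
    rw [iteratedFDerivAlong_insert hr hB hsn, ih_near.fderiv_eq, fderiv_fun_sum hterm,
      sum_powerset_insert hrs, ← sum_add_distrib, _root_.sum_apply]
    refine sum_congr rfl fun t ht => ?_
    have hts := mem_powerset.1 ht
    rw [fderiv_bilinear_iteratedFDerivAlong B ha hb (fun q hq => hr q (hts hq)) (hcard hts)
        (fun q hq => hr q (sdiff_subset hq)) (hcard sdiff_subset),
      insert_sdiff_of_notMem _ (mt (@hts r) hrs), insert_sdiff_insert, sdiff_insert_of_notMem hrs]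

theorem iteratedFDeriv_bilinear_eq_sum_shuffles (B : F →L[𝕜] G →L[𝕜] H) {a : E → F} {b : E → G}
    {k : ℕ} (ha : ContDiffAt 𝕜 k a x) (hb : ContDiffAt 𝕜 k b x) (v : Fin k → E) :
    iteratedFDeriv 𝕜 k (fun y => B (a y) (b y)) x v =
      ∑ i : Fin (k + 1), ∑ σ ∈ shuffles k i,
        B (iteratedFDeriv 𝕜 i a x fun r => v (σ (finL i i.is_le r)))
          (iteratedFDeriv 𝕜 (k - i) b x fun r =>
            v (σ (finR i (Nat.add_sub_of_le i.is_le) r))) := by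
  rw [← iteratedFDerivAlong_univ, iteratedFDerivAlong_bilinear B ha hb (card_fin k).le,
    powerset_univ, sum_finset_eq_sum_shuffles]
  refine sum_congr rfl fun i _ => sum_congr rfl fun σ hσ => ?_
  have hi := Nat.add_sub_of_le i.is_le
  obtain ⟨hσL, hσR⟩ := (mem_shuffles_iff_strictMono hi).1 hσ
  rw [← compl_eq_univ_sdiff, compl_image_finL hi, iteratedFDerivAlong_image hσL,
    iteratedFDerivAlong_image hσR]
  rfl

end Leibniz

section Symmetry

open scoped Topology

variable {u : E → F} {x : E} {m : ℕ}

theorem iteratedFDeriv_add_two_cons_cons (hu : ContDiffAt 𝕜 (m + 2 : ℕ) u x)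
    (y z : E) (w : Fin m → E) :
    iteratedFDeriv 𝕜 (m + 2) u x (Fin.cons y (Fin.cons z w)) =
      fderiv 𝕜 (fderiv 𝕜 (iteratedFDeriv 𝕜 m u)) x y z w := by
  have hDsucc : DifferentiableAt 𝕜 (iteratedFDeriv 𝕜 (m + 1) u) x :=
    hu.differentiableAt_iteratedFDeriv (Nat.cast_lt.2 (Nat.lt_succ_self _))
  have hD : ContDiffAt 𝕜 (1 + 1) (iteratedFDeriv 𝕜 m u) x :=
    hu.iteratedFDeriv_right (by simp [one_add_one_eq_two, add_comm])
  have hdD : DifferentiableAt 𝕜 (fderiv 𝕜 (iteratedFDeriv 𝕜 m u)) x :=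
    (hD.fderiv_right le_rfl).differentiableAt one_ne_zero
  have hdDz : DifferentiableAt 𝕜 (fun q => fderiv 𝕜 (iteratedFDeriv 𝕜 m u) q z) x := by fun_prop
  calc iteratedFDeriv 𝕜 (m + 2) u x (Fin.cons y (Fin.cons z w))
      = fderiv 𝕜 (fun q => fderiv 𝕜 (iteratedFDeriv 𝕜 m u) q z w) x y :=
        hDsucc.iteratedFDeriv_succ_apply_left'
    _ = fderiv 𝕜 (fun q => fderiv 𝕜 (iteratedFDeriv 𝕜 m u) q z) x y w :=
        fderiv_continuousMultilinear_apply_const_apply hdDz w y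
    _ = fderiv 𝕜 (fderiv 𝕜 (iteratedFDeriv 𝕜 m u)) x y z w := by
        simp [fderiv_clm_apply hdD (differentiableAt_const z)]

theorem iteratedFDeriv_cons_cons_comm (hu : ContDiffAt 𝕜 (minSmoothness 𝕜 (m + 2 : ℕ)) u x)
    (y z : E) (w : Fin m → E) :
    iteratedFDeriv 𝕜 (m + 2) u x (Fin.cons y (Fin.cons z w)) =
      iteratedFDeriv 𝕜 (m + 2) u x (Fin.cons z (Fin.cons y w)) := by
  have hD : ContDiffAt 𝕜 (minSmoothness 𝕜 2) (iteratedFDeriv 𝕜 m u) x :=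
    hu.iteratedFDeriv_right (by rw [← minSmoothness_add, add_comm, Nat.cast_add, Nat.cast_ofNat])
  have hu' := hu.of_le le_minSmoothness
  rw [iteratedFDeriv_add_two_cons_cons hu', iteratedFDeriv_add_two_cons_cons hu',
    hD.isSymmSndFDerivAt le_rfl y z]

theorem iteratedFDeriv_succ_cons (hu : ContDiffAt 𝕜 (minSmoothness 𝕜 (m + 1 : ℕ)) u x)
    (z : E) (w : Fin m → E) :
    iteratedFDeriv 𝕜 (m + 1) u x (Fin.cons z w) = iteratedFDeriv 𝕜 m (fderiv 𝕜 u) x w z := by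
  induction m generalizing x with
  | zero => simp [iteratedFDeriv_succ_apply_right]
  | succ m ih =>
    have hu' : ContDiffAt 𝕜 (m + 2 : ℕ) u x := hu.of_le le_minSmoothness
    have h_near : (fun y => iteratedFDeriv 𝕜 (m + 1) u y (Fin.cons z (Fin.tail w))) =ᶠ[𝓝 x]
        fun y => iteratedFDeriv 𝕜 m (fderiv 𝕜 u) y (Fin.tail w) z := by
      filter_upwards [hu.eventually (by simp)] with y hy
      exact ih (hy.of_le (minSmoothness_monotone (Nat.cast_le.2 (Nat.le_succ _)))) _
    have hDu : DifferentiableAt 𝕜 (iteratedFDeriv 𝕜 (m + 1) u) x :=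
      hu'.differentiableAt_iteratedFDeriv (Nat.cast_lt.2 (Nat.lt_succ_self _))
    have hDdu : DifferentiableAt 𝕜 (iteratedFDeriv 𝕜 m (fderiv 𝕜 u)) x :=
      (hu'.fderiv_right (m := (m + 1 : ℕ)) (by norm_cast)).differentiableAt_iteratedFDeriv
        (Nat.cast_lt.2 (Nat.lt_succ_self _))
    calc iteratedFDeriv 𝕜 (m + 2) u x (Fin.cons z w)
        = iteratedFDeriv 𝕜 (m + 2) u x (Fin.cons (w 0) (Fin.cons z (Fin.tail w))) := by
          rw [← iteratedFDeriv_cons_cons_comm hu, Fin.cons_self_tail]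
      _ = fderiv 𝕜 (fun y => iteratedFDeriv 𝕜 (m + 1) u y (Fin.cons z (Fin.tail w))) x (w 0) :=
          hDu.iteratedFDeriv_succ_apply_left'
      _ = fderiv 𝕜 (fun y => iteratedFDeriv 𝕜 m (fderiv 𝕜 u) y (Fin.tail w) z) x (w 0) := by
          rw [h_near.fderiv_eq]
      _ = fderiv 𝕜 (fun y => iteratedFDeriv 𝕜 m (fderiv 𝕜 u) y (Fin.tail w)) x (w 0) z := by
          simp [fderiv_clm_apply (hDdu.continuousMultilinear_apply_const (Fin.tail w))
            (differentiableAt_const z)]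
      _ = iteratedFDeriv 𝕜 (m + 1) (fderiv 𝕜 u) x w z := by
          rw [hDdu.iteratedFDeriv_succ_apply_left']

end Symmetry

theorem deriv_grad_dot_field_general {u : E → F} {f : E → E} {x : E} {j : ℕ}
    (hu : ContDiffAt 𝕜 (minSmoothness 𝕜 (j + 1 : ℕ)) u x) (hf : ContDiffAt 𝕜 j f x)
    (v : Fin j → E) :
    iteratedFDeriv 𝕜 j (fun y => fderiv 𝕜 u y (f y)) x v =
      ∑ i : Fin (j + 1), ∑ σ ∈ shuffles j i,
        iteratedFDeriv 𝕜 (i + 1) u x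
          (Fin.cons
            (iteratedFDeriv 𝕜 (j - i) f x fun r =>
              v (σ (finR i (Nat.add_sub_of_le i.is_le) r)))
            fun r => v (σ (finL i i.is_le r))) := by
  have hdu : ContDiffAt 𝕜 j (fderiv 𝕜 u) x := hu.fderiv_right le_minSmoothness
  have hui (i : Fin (j + 1)) : ContDiffAt 𝕜 (minSmoothness 𝕜 (i + 1 : ℕ)) u x :=
    hu.of_le (minSmoothness_monotone (Nat.cast_le.2 i.isLt))
  simp only [iteratedFDeriv_succ_cons (hui _)]
  exact iteratedFDeriv_bilinear_eq_sum_shuffles (ContinuousLinearMap.id 𝕜 (E →L[𝕜] F)) hdu hf v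

end Derivatives

section Coordinates

variable {n m : ℕ}

theorem iteratedFDeriv_cons_eq_sum_Dt (u : (Fin n → ℝ) → ℝ) (x y : Fin n → ℝ)
    (idx : Fin m → Fin n) :
    iteratedFDeriv ℝ (m + 1) u x (Fin.cons y fun r => Pi.single (idx r) 1) =
      ∑ s, Dt n (m + 1) u x (Fin.cons s idx) * y s := by
  have h_single (s : Fin n) : Dt n (m + 1) u x (Fin.cons s idx) =
      fderiv ℝ (iteratedFDeriv ℝ m u) x (Pi.single s 1) fun r => Pi.single (idx r) 1 := rfl
  rw [iteratedFDeriv_succ_apply_left, Fin.cons_zero, Fin.tail_cons]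
  conv_lhs => rw [pi_eq_sum_univ' y]
  simp [h_single, mul_comm]

theorem fderiv_apply_eq_sum_Dt (u : (Fin n → ℝ) → ℝ) (x y : Fin n → ℝ) :
    fderiv ℝ u x y = ∑ s, Dt n 1 u x (fun _ => s) * y s := by
  have h_cons (s : Fin n) : (fun _ : Fin 1 => s) = Fin.cons s Fin.elim0 := by
    simp [funext_iff]
  simpa [h_cons] using iteratedFDeriv_cons_eq_sum_Dt u x y Fin.elim0

theorem iteratedFDeriv_single_apply_eq_Dt {f : (Fin n → ℝ) → Fin n → ℝ} {x : Fin n → ℝ} {N : ℕ}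
    (hf : ContDiffAt ℝ N f x) (hm : m ≤ N) (idx : Fin m → Fin n) (s : Fin n) :
    iteratedFDeriv ℝ m f x (fun r => Pi.single (idx r) 1) s = Dt n m (fun y => f y s) x idx := by
  have h_proj : (fun y => f y s) = ContinuousLinearMap.proj (R := ℝ) s ∘ f := rfl
  rw [Dt, h_proj, ContinuousLinearMap.iteratedFDeriv_comp_left _ hf (Nat.cast_le.2 hm)]
  rfl

end Coordinates

/-- For `j ≥ 1`, `u ∈ C^{j+1}(ℝⁿ;ℝ)` and `f ∈ C^{j}(ℝⁿ;ℝⁿ)`,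
`D^j(x ↦ ∇u(x)ᵀ f(x))(ξ) = Σ_{i=0}^{j} Sym_{i,j−i}( D^{i+1}u(ξ) *₁,₁ D^{j−i}f(ξ) )`,
stated entrywise for every multi-index `idx`. -/
theorem deriv_grad_dot_field {n : ℕ} (j : ℕ) (hj : 1 ≤ j)
    (u : (Fin n → ℝ) → ℝ) (f : (Fin n → ℝ) → Fin n → ℝ)
    (hu : ContDiff ℝ ((j + 1 : ℕ) : ℕ∞) u) (hf : ContDiff ℝ (j : ℕ∞) f)
    (ξ : Fin n → ℝ) (idx : Fin j → Fin n) :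
    Dt n j (fun x => ∑ s : Fin n, Dt n 1 u x (fun _ => s) * f x s) ξ idx =
      ∑ i : Fin (j + 1), ∑ σ ∈ shuffles j (i : ℕ), ∑ s : Fin n,
        Dt n ((i : ℕ) + 1) u ξ
            (Fin.cons s fun r : Fin (i : ℕ) =>
              idx (σ (finL (i : ℕ) (by have := i.isLt; omega) r))) *
          Dt n (j - (i : ℕ)) (fun x => f x s) ξ
            (fun r => idx (σ (finR (i : ℕ) (by have := i.isLt; omega) r))) := by
  have huξ : ContDiffAt ℝ (minSmoothness ℝ (j + 1 : ℕ)) u ξ := by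
    rw [minSmoothness_of_isRCLikeNormedField]
    exact hu.contDiffAt
  have hfξ : ContDiffAt ℝ j f ξ := hf.contDiffAt
  simpa only [fderiv_apply_eq_sum_Dt, iteratedFDeriv_cons_eq_sum_Dt,
    iteratedFDeriv_single_apply_eq_Dt hfξ (Nat.sub_le j _)] using!
    deriv_grad_dot_field_general huξ hfξ fun r => Pi.single (idx r) 1
end

section
/- Let 3 ≤ j ≤ k and suppose: f ∈ C^k(ℝⁿ;ℝⁿ), h ∈ C^k(ℝⁿ;ℝ^p); V: [0,T]×ℝⁿ → ℝ is such that V(t,·) ∈ C^{k+1}(ℝⁿ;ℝ) for each t, that V and its spatial derivatives are C¹ in time with ∂_t D^j V(t,ξ) = D^j (∂_t V)(t,ξ), and that V satisfies the HJB equation ∂_t V(t,ξ) = −∇V(t,ξ)ᵀ f(ξ) − ½‖Gᵀ∇V(t,ξ)‖²_{R⁻¹} + ½‖y(t) − h(ξ)‖²_Q. Then for all (t,ξ) ∈ [0,T]×ℝⁿ: ∂_t D^j V(t,ξ) = −Σ_{i=0}^{j} Sym_{i,j−i}( D^{i+1} V(t,ξ) *_{1,1} D^{j−i} f(ξ) )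 − ½ Σ_{i=0}^{j} Sym_{i,j−i}( D^{i+1} V(t,ξ) *_{1,1} ( G R⁻¹ Gᵀ *_{2,1} D^{j−i+1} V(t,ξ) ) ) − D^j h(ξ) *_{1,1} (Q y(t)) + ½ Σ_{i=0}^{j} Sym_{i,j−i}( D^i h(ξ) *_{1,1} ( Q *_{2,1} D^{j−i} h(ξ) ) ). -/
open scoped BigOperators
open Matrix

/-!
The right-hand side of the HJB equation is a sum of bilinear expressions in `∇V`, `f`, `h`, so its
`j`-th derivative along coordinate directions is given by the Leibniz rule: a sum over all ways of
distributing the `j` directions to the two factors. Grouped by the number `i` of directions falling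
on the first factor, these ways correspond to the `(i, j - i)`-shuffles, a shuffle listing the first
factor's directions increasingly and then those of the second. By symmetry of higher derivatives,
`D^i` of the `s`-th entry of `∇V` is `D^(i+1) V` with `s` in the first slot. In `½‖y - h‖²_Q`, which
is expanded by symmetry of `Q`, the part constant in `ξ` disappears because `j ≥ 1`.
-/

section Shuffles

open Finset

/-- The indicator of the positions of `Fin j` that a permutation fills from the first `i` arguments.
A shuffle is determined by it. -/
def firstBlockIndicator {j : ℕ} (i : ℕ) (σ : Equiv.Perm (Fin j)) : Fin j → Bool :=
  fun r => decide ((σ.symm r : ℕ) < i)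

/-- The shuffle with a prescribed first block `c`: it lists the positions in `c` increasingly,
followed by the remaining positions increasingly. Since `false < true`, this is the stable sort
along the negation of `c`. -/
def sortingShuffle {j : ℕ} (c : Fin j → Bool) : Equiv.Perm (Fin j) :=
  Tuple.sort fun r => !c r

variable {j : ℕ}

lemma val_lt_card_iff_sortingShuffle (c : Fin j → Bool) (a : Fin j) :
    (a : ℕ) < #{r | c r = true} ↔ c (sortingShuffle c a) = true := by
  have card_eq : #{r | c r = true} =
      #{r | ((fun r => !c r) ∘ sortingShuffle c) r ≤ false} := by
    refine (card_equiv (sortingShuffle c) fun r => ?_).symm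
    simp [Bool.le_iff_imp]
  rw [card_eq]
  refine (Tuple.lt_card_le_iff_apply_le_of_monotone (Tuple.monotone_sort fun r => !c r)).trans ?_
  simp [sortingShuffle, Bool.le_iff_imp]

lemma sortingShuffle_lt_of_eq (c : Fin j → Bool) {a b : Fin j} (hab : a < b)
    (hc : c (sortingShuffle c a) = c (sortingShuffle c b)) :
    sortingShuffle c a < sortingShuffle c b :=
  (Tuple.eq_sort_iff.1 (rfl : sortingShuffle c = Tuple.sort fun r => !c r)).2 a b hab
    (congrArg (!·) hc)

lemma sortingShuffle_mem_shuffles (c : Fin j → Bool) :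
    sortingShuffle c ∈ shuffles j #{r | c r = true} := by
  have in_first := val_lt_card_iff_sortingShuffle c
  simp only [shuffles, mem_filter, mem_univ, true_and]
  refine ⟨fun a b hab hb => ?_, fun a b hab ha => ?_⟩
  · exact sortingShuffle_lt_of_eq c hab
      (((in_first a).1 (lt_trans hab hb)).trans ((in_first b).1 hb).symm)
  · have not_first : ∀ d : Fin j, a ≤ d → c (sortingShuffle c d) = false := fun d had =>
      Bool.eq_false_iff.2 ((in_first d).not.1 (not_lt.2 (ha.trans had)))
    exact sortingShuffle_lt_of_eq c hab ((not_first a le_rfl).trans (not_first b hab.le).symm)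

lemma firstBlockIndicator_sortingShuffle (c : Fin j → Bool) :
    firstBlockIndicator #{r | c r = true} (sortingShuffle c) = c := by
  funext r
  simp [firstBlockIndicator, val_lt_card_iff_sortingShuffle]

lemma card_firstBlockIndicator {i : ℕ} (hi : i ≤ j) (σ : Equiv.Perm (Fin j)) :
    #{r | firstBlockIndicator i σ r = true} = i :=
  calc #{r | firstBlockIndicator i σ r = true}
      = #{a : Fin j | (a : ℕ) < i} :=
        card_equiv σ.symm fun r => by simp [firstBlockIndicator]
    _ = i := by rw [Fin.card_filter_val_lt, min_eq_right hi]

lemma sortingShuffle_firstBlockIndicator {i : ℕ} {σ : Equiv.Perm (Fin j)}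
    (hσ : σ ∈ shuffles j i) : sortingShuffle (firstBlockIndicator i σ) = σ := by
  obtain ⟨mono_first, mono_second⟩ := (mem_filter.1 hσ).2
  refine (Tuple.eq_sort_iff.2 ⟨fun a b hab => ?_, fun a b hab heq => ?_⟩).symm
  · have second_block : i ≤ (a : ℕ) → i ≤ (b : ℕ) := fun ha => ha.trans hab
    simpa [firstBlockIndicator, Bool.le_iff_imp] using second_block
  · have same_block : (a : ℕ) < i ↔ (b : ℕ) < i := by simpa [firstBlockIndicator] using heq
    by_cases hb : (b : ℕ) < i
    · exact mono_first a b hab hb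
    · exact mono_second a b hab (not_lt.1 (same_block.not.2 hb))

lemma sum_bool_eq_sum_shuffles {M : Type*} [AddCommMonoid M] (F : (Fin j → Bool) → M) :
    ∑ c, F c = ∑ i : Fin (j + 1), ∑ σ ∈ shuffles j i, F (firstBlockIndicator i σ) := by
  rw [sum_sigma']
  have card_lt (c : Fin j → Bool) : #{r | c r = true} < j + 1 :=
    Nat.lt_succ_of_le (card_finset_fin_le _)
  refine sum_bij' (fun c _ => ⟨⟨#{r | c r = true}, card_lt c⟩, sortingShuffle c⟩)
    (fun x _ => firstBlockIndicator x.1 x.2)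
    (fun c _ => by simpa using sortingShuffle_mem_shuffles c) (fun _ _ => mem_univ _)
    (fun c _ => firstBlockIndicator_sortingShuffle c) (fun x hx => ?_)
    (fun c _ => by rw [firstBlockIndicator_sortingShuffle])
  exact Sigma.ext (Fin.ext (card_firstBlockIndicator (Nat.lt_succ_iff.1 x.1.2) x.2))
    (heq_of_eq (sortingShuffle_firstBlockIndicator (mem_sigma.1 hx).2))

end Shuffles

section SelectedEntries

open Finset

variable {α : Type*} {j : ℕ}

/-- The entries of the tuple `w` at the positions where `c` holds, in increasing order of
position. Lists avoid having to carry the number of selected positions in the type. -/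
def selectedEntries (w : Fin j → α) (c : Fin j → Bool) : List α :=
  ((List.finRange j).filter c).map w

lemma length_selectedEntries_le (w : Fin j → α) (c : Fin j → Bool) :
    (selectedEntries w c).length ≤ j := by
  simpa [selectedEntries] using List.length_filter_le c (List.finRange j)

lemma selectedEntries_eq_nil (w : Fin 0 → α) (c : Fin 0 → Bool) : selectedEntries w c = [] := rfl

lemma selectedEntries_cons_true (w : Fin (j + 1) → α) (c : Fin j → Bool) :
    selectedEntries w (Fin.cons true c : Fin (j + 1) → Bool) =
      w 0 :: selectedEntries (Fin.tail w) c := by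
  simp [selectedEntries, List.finRange_succ, List.filter_map, Function.comp_def, Fin.tail]

lemma selectedEntries_cons_false (w : Fin (j + 1) → α) (c : Fin j → Bool) :
    selectedEntries w (Fin.cons false c : Fin (j + 1) → Bool) =
      selectedEntries (Fin.tail w) c := by
  simp [selectedEntries, List.finRange_succ, List.filter_map, Function.comp_def, Fin.tail]

lemma sum_selectedEntries_succ {M : Type*} [AddCommMonoid M] (w : Fin (j + 1) → α)
    (F : List α → List α → M) :
    ∑ c : Fin (j + 1) → Bool, F (selectedEntries w c) (selectedEntries w fun r => !c r) =
      ∑ c : Fin j → Bool,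
        (F (w 0 :: selectedEntries (Fin.tail w) c) (selectedEntries (Fin.tail w) fun r => !c r) +
          F (selectedEntries (Fin.tail w) c)
            (w 0 :: selectedEntries (Fin.tail w) fun r => !c r)) := by
  have not_cons (b : Bool) (c : Fin j → Bool) :
      (fun r => !(Fin.cons b c : Fin (j + 1) → Bool) r) = Fin.cons (!b) fun r => !c r :=
    funext (Fin.cases rfl fun _ => rfl)
  rw [← (Fin.consEquiv fun _ : Fin (j + 1) => Bool).sum_comp, Fintype.sum_prod_type_right]
  simp only [Fin.consEquiv, Equiv.coe_fn_mk, Fintype.sum_bool, not_cons, Bool.not_true,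
    Bool.not_false, selectedEntries_cons_true, selectedEntries_cons_false]

lemma selectedEntries_eq_ofFn (w : Fin j → α) {c : Fin j → Bool} {l : ℕ} {g : Fin l → Fin j}
    (hg : StrictMono g) (hc : ∀ r, c r = true ↔ r ∈ Set.range g) :
    selectedEntries w c = List.ofFn (w ∘ g) := by
  have sorted_filter : ((List.finRange j).filter c).Pairwise (· < ·) :=
    (List.pairwise_lt_finRange j).filter _
  have sorted_ofFn : (List.ofFn g).Pairwise (· < ·) := List.pairwise_ofFn.2 fun _ _ h => hg h
  rw [selectedEntries, sorted_filter.eq_of_mem_iff sorted_ofFn fun r => by simp [hc, List.mem_ofFn],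
    List.map_ofFn]

variable {i l : ℕ} {σ : Equiv.Perm (Fin j)}

lemma selectedEntries_firstBlockIndicator (hi : i ≤ j) (hσ : σ ∈ shuffles j i) (w : Fin j → α) :
    selectedEntries w (firstBlockIndicator i σ) = List.ofFn fun r => w (σ (finL i hi r)) := by
  refine selectedEntries_eq_ofFn w (g := fun r => σ (finL i hi r))
    (fun a b hab => (mem_filter.1 hσ).2.1 _ _ hab b.2) fun r => ?_
  simp only [firstBlockIndicator, decide_eq_true_eq, Set.mem_range, ← Equiv.eq_symm_apply]
  exact ⟨fun hr => ⟨⟨_, hr⟩, rfl⟩, fun ⟨a, ha⟩ => ha ▸ a.2⟩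

lemma selectedEntries_not_firstBlockIndicator (hil : i + l = j) (hσ : σ ∈ shuffles j i)
    (w : Fin j → α) :
    selectedEntries w (fun r => !firstBlockIndicator i σ r) =
      List.ofFn fun r => w (σ (finR i hil r)) := by
  refine selectedEntries_eq_ofFn w (g := fun r => σ (finR i hil r))
    (fun a b hab => (mem_filter.1 hσ).2.2 _ _ (Nat.add_lt_add_left hab i) (Nat.le_add_right i a))
    fun r => ?_
  simp only [firstBlockIndicator, Bool.not_eq_true', decide_eq_false_iff_not, not_lt, Set.mem_range,
    ← Equiv.eq_symm_apply]
  refine ⟨fun hr => ⟨⟨(σ.symm r : ℕ) - i, by omega⟩, Fin.ext (Nat.add_sub_cancel' hr)⟩, ?_⟩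
  rintro ⟨a, ha⟩
  exact ha ▸ Nat.le_add_right i a

end SelectedEntries

section ShuffleSum

variable {α M : Type*} [AddCommMonoid M] {j : ℕ}

/-- The entry at `w` of `∑ᵢ Sym_{i,j-i} F i`, where `F i` is an order-`j` tensor whose arguments are
grouped into its first `i` and its last `j - i` ones. -/
def shuffleSum (w : Fin j → α) (F : (i : ℕ) → (Fin i → α) → (Fin (j - i) → α) → M) : M :=
  ∑ i : Fin (j + 1), ∑ σ ∈ shuffles j i,
    F i (fun r => w (σ (finL i (Nat.lt_succ_iff.1 i.2) r)))
      (fun r => w (σ (finR i (Nat.add_sub_cancel' (Nat.lt_succ_iff.1 i.2)) r)))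

lemma shuffleSum_congr {w : Fin j → α} {F F' : (i : ℕ) → (Fin i → α) → (Fin (j - i) → α) → M}
    (hF : ∀ i ≤ j, ∀ a b, F i a b = F' i a b) : shuffleSum w F = shuffleSum w F' :=
  Finset.sum_congr rfl fun i _ => Finset.sum_congr rfl fun _ _ =>
    hF i (Nat.lt_succ_iff.1 i.2) _ _

lemma shuffleSum_map {β : Type*} (g : β → α) (w : Fin j → β)
    (F : (i : ℕ) → (Fin i → α) → (Fin (j - i) → α) → M) :
    shuffleSum (fun r => g (w r)) F =
      shuffleSum w fun i a b => F i (fun r => g (a r)) (fun r => g (b r)) :=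
  rfl

lemma sum_selectedEntries_eq_shuffleSum (w : Fin j → α) (F : List α → List α → M) :
    ∑ c : Fin j → Bool, F (selectedEntries w c) (selectedEntries w fun r => !c r) =
      shuffleSum w fun _ a b => F (List.ofFn a) (List.ofFn b) := by
  rw [sum_bool_eq_sum_shuffles, shuffleSum]
  refine Finset.sum_congr rfl fun i _ => Finset.sum_congr rfl fun σ hσ => ?_
  rw [selectedEntries_firstBlockIndicator (Nat.lt_succ_iff.1 i.2) hσ,
    selectedEntries_not_firstBlockIndicator (Nat.add_sub_cancel' (Nat.lt_succ_iff.1 i.2)) hσ]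

end ShuffleSum

section Leibniz

variable {𝕜 E F F₁ F₂ : Type*} [NontriviallyNormedField 𝕜]
  [NormedAddCommGroup E] [NormedSpace 𝕜 E] [NormedAddCommGroup F] [NormedSpace 𝕜 F]
  [NormedAddCommGroup F₁] [NormedSpace 𝕜 F₁] [NormedAddCommGroup F₂] [NormedSpace 𝕜 F₂]

variable (𝕜) in
/-- The iterated derivative of `u` along the vectors of a list, its length being the order. -/
noncomputable def derivAlong (u : E → F) (l : List E) (x : E) : F :=
  iteratedFDeriv 𝕜 l.length u x l.get

lemma derivAlong_nil (u : E → F) (x : E) : derivAlong 𝕜 u [] x = u x :=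
  iteratedFDeriv_zero_apply _

lemma derivAlong_ofFn {j : ℕ} (u : E → F) (w : Fin j → E) (x : E) :
    derivAlong 𝕜 u (List.ofFn w) x = iteratedFDeriv 𝕜 j u x w := by
  have cast_order : ∀ {k l : ℕ} (h : k = l) (v : Fin k → E),
      iteratedFDeriv 𝕜 k u x v = iteratedFDeriv 𝕜 l u x (v ∘ Fin.cast h.symm) := by
    rintro k _ rfl v
    rfl
  rw [derivAlong, cast_order List.length_ofFn]
  congr 1
  funext r
  simp

lemma iteratedFDeriv_succ_apply_of_contDiff {u : E → F} {j : ℕ}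
    (hu : ContDiff 𝕜 (j + 1 : ℕ) u) (w : Fin (j + 1) → E) (x : E) :
    iteratedFDeriv 𝕜 (j + 1) u x w =
      fderiv 𝕜 (fun x => iteratedFDeriv 𝕜 j u x (Fin.tail w)) x (w 0) :=
  (hu.differentiable_iteratedFDeriv (by exact_mod_cast j.lt_succ_self)
    x).iteratedFDeriv_succ_apply_left'

lemma derivAlong_cons {u : E → F} {l : List E} (hu : ContDiff 𝕜 (l.length + 1 : ℕ) u)
    (a : E) (x : E) : derivAlong 𝕜 u (a :: l) x = fderiv 𝕜 (derivAlong 𝕜 u l) x a :=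
  iteratedFDeriv_succ_apply_of_contDiff hu _ x

lemma differentiable_derivAlong {u : E → F} {l : List E} (hu : ContDiff 𝕜 (l.length + 1 : ℕ) u) :
    Differentiable 𝕜 (derivAlong 𝕜 u l) :=
  (hu.differentiable_iteratedFDeriv
    (by exact_mod_cast l.length.lt_succ_self)).continuousMultilinear_apply_const _

lemma iteratedFDeriv_bilinear_eq_sum_selectedEntries (B : F₁ →L[𝕜] F₂ →L[𝕜] F) {u : E → F₁}
    {v : E → F₂} {j : ℕ} (hu : ContDiff 𝕜 j u) (hv : ContDiff 𝕜 j v) (w : Fin j → E) (x : E) :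
    iteratedFDeriv 𝕜 j (fun x => B (u x) (v x)) x w =
      ∑ c : Fin j → Bool, B (derivAlong 𝕜 u (selectedEntries w c) x)
        (derivAlong 𝕜 v (selectedEntries w fun r => !c r) x) := by
  induction j generalizing x with
  | zero => simp [selectedEntries_eq_nil, derivAlong_nil]
  | succ j ih =>
    have le_succ : (j : WithTop ℕ∞) ≤ (j + 1 : ℕ) := by exact_mod_cast j.le_succ
    have length_succ_le (c : Fin j → Bool) :
        ((selectedEntries (Fin.tail w) c).length + 1 : ℕ) ≤ ((j + 1 : ℕ) : WithTop ℕ∞) := by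
      exact_mod_cast Nat.add_le_add_right (length_selectedEntries_le (Fin.tail w) c) 1
    have hu' c := hu.of_le (length_succ_le c)
    have hv' c := hv.of_le (length_succ_le c)
    have du c := differentiable_derivAlong (hu' c) x
    have dv c := differentiable_derivAlong (hv' c) x
    rw [iteratedFDeriv_succ_apply_of_contDiff (B.isBoundedBilinearMap.contDiff.comp₂ hu hv),
      sum_selectedEntries_succ w fun l l' => B (derivAlong 𝕜 u l x) (derivAlong 𝕜 v l' x)]
    simp only [ih (hu.of_le le_succ) (hv.of_le le_succ)]
    rw [fderiv_fun_sum fun c _ => (B.hasFDerivAt_of_bilinear (du c).hasFDerivAt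
      (dv _).hasFDerivAt).differentiableAt, _root_.sum_apply]
    refine Finset.sum_congr rfl fun c _ => ?_
    rw [B.fderiv_of_bilinear (du _) (dv _), derivAlong_cons (hu' _), derivAlong_cons (hv' _)]
    simp [add_comm]

theorem iteratedFDeriv_bilinear_eq_shuffleSum (B : F₁ →L[𝕜] F₂ →L[𝕜] F) {u : E → F₁}
    {v : E → F₂} {j : ℕ} (hu : ContDiff 𝕜 j u) (hv : ContDiff 𝕜 j v) (w : Fin j → E) (x : E) :
    iteratedFDeriv 𝕜 j (fun x => B (u x) (v x)) x w =
      shuffleSum w fun i a b => B (iteratedFDeriv 𝕜 i u x a) (iteratedFDeriv 𝕜 (j - i) v x b) := by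
  rw [iteratedFDeriv_bilinear_eq_sum_selectedEntries B hu hv,
    sum_selectedEntries_eq_shuffleSum w fun l l' => B (derivAlong 𝕜 u l x) (derivAlong 𝕜 v l' x)]
  simp only [derivAlong_ofFn]

end Leibniz

theorem iteratedFDeriv_fderiv_apply_eq_cons {𝕜 E F : Type*} [NontriviallyNormedField 𝕜]
    [IsRCLikeNormedField 𝕜] [NormedAddCommGroup E] [NormedSpace 𝕜 E] [NormedAddCommGroup F]
    [NormedSpace 𝕜 F] {u : E → F} {j : ℕ} (hu : ContDiff 𝕜 (j + 1 : ℕ) u) (v : E) (w : Fin j → E)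
    (x : E) :
    iteratedFDeriv 𝕜 j (fun x => fderiv 𝕜 u x v) x w =
      iteratedFDeriv 𝕜 (j + 1) u x (Fin.cons v w) := by
  induction j generalizing x with
  | zero => simp [iteratedFDeriv_succ_apply_right]
  | succ j ih =>
    have hu' : ContDiff 𝕜 (j + 1 : ℕ) u := hu.of_le (by exact_mod_cast (j + 1).le_succ)
    have hv : ContDiff 𝕜 (j + 1 : ℕ) fun x => fderiv 𝕜 u x v :=
      (hu.fderiv_right (by norm_cast)).clm_apply contDiff_const
    set g : E → F := fun x => iteratedFDeriv 𝕜 j u x (Fin.tail w) with g_def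
    have hg : ContDiff 𝕜 2 g :=
      (ContinuousMultilinearMap.apply 𝕜 (fun _ : Fin j => E) F (Fin.tail w)).contDiff.comp
        (hu.iteratedFDeriv_right (by norm_cast; omega))
    have fderiv_fderiv_apply (a b : E) :
        fderiv 𝕜 (fun y => fderiv 𝕜 g y a) x b = fderiv 𝕜 (fderiv 𝕜 g) x b a := by
      have hg' : DifferentiableAt 𝕜 (fderiv 𝕜 g) x :=
        (hg.fderiv_right (m := 1) (by norm_num)).differentiable one_ne_zero x
      simp [fderiv_clm_apply hg' (differentiableAt_const a)]
    calc iteratedFDeriv 𝕜 (j + 1) (fun x => fderiv 𝕜 u x v) x w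
        = fderiv 𝕜 (fun y => fderiv 𝕜 g y v) x (w 0) := by
          simp only [iteratedFDeriv_succ_apply_of_contDiff hv, ih hu',
            iteratedFDeriv_succ_apply_of_contDiff hu', Fin.tail_cons, Fin.cons_zero, g_def]
      _ = fderiv 𝕜 (fun y => fderiv 𝕜 g y (w 0)) x v := by
          rw [fderiv_fderiv_apply, fderiv_fderiv_apply]
          exact hg.contDiffAt.isSymmSndFDerivAt (by simp) _ _
      _ = iteratedFDeriv 𝕜 (j + 2) u x (Fin.cons v w) := by
          simp only [iteratedFDeriv_succ_apply_of_contDiff hu, Fin.tail_cons, Fin.cons_zero,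
            iteratedFDeriv_succ_apply_of_contDiff hu', g_def]

section MatrixForms

variable {ι κ S : Type*} [Fintype ι] [Fintype κ]

lemma dotProduct_mulVec_sub_self [CommRing S] {Q : Matrix ι ι S} (hQ : Q.IsSymm) (y z : ι → S) :
    (y - z) ⬝ᵥ Q *ᵥ (y - z) = z ⬝ᵥ Q *ᵥ z + (-2) * (z ⬝ᵥ Q *ᵥ y) + y ⬝ᵥ Q *ᵥ y := by
  have symm_form : y ⬝ᵥ Q *ᵥ z = z ⬝ᵥ Q *ᵥ y := by
    rw [← dotProduct_transpose_mulVec, hQ.eq]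
  rw [mulVec_sub, sub_dotProduct, dotProduct_sub, dotProduct_sub, symm_form]
  ring

lemma transpose_mulVec_dotProduct_mulVec [CommSemiring S] (G : Matrix ι κ S) (P : Matrix κ κ S)
    (z : ι → S) :
    (Gᵀ *ᵥ z) ⬝ᵥ P *ᵥ (Gᵀ *ᵥ z) = z ⬝ᵥ (G * P * Gᵀ) *ᵥ z := by
  rw [← mulVec_mulVec, ← mulVec_mulVec, dotProduct_mulVec z G, ← mulVec_transpose]

end MatrixForms

section Smoothness

variable {𝕜 E ι κ : Type*} [NontriviallyNormedField 𝕜] [NormedAddCommGroup E] [NormedSpace 𝕜 E]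
  [Fintype κ] {k : WithTop ℕ∞}

lemma contDiff_dotProduct {u v : E → κ → 𝕜} (hu : ContDiff 𝕜 k u) (hv : ContDiff 𝕜 k v) :
    ContDiff 𝕜 k fun x => u x ⬝ᵥ v x :=
  ContDiff.sum fun s _ => (contDiff_pi.1 hu s).mul (contDiff_pi.1 hv s)

lemma contDiff_mulVec [Fintype ι] (A : Matrix ι κ 𝕜) {v : E → κ → 𝕜} (hv : ContDiff 𝕜 k v) :
    ContDiff 𝕜 k fun x => A *ᵥ v x :=
  contDiff_pi.2 fun _ => contDiff_dotProduct contDiff_const hv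

end Smoothness

section DerivativeTensor

variable {n j : ℕ} {ι κ : Type*} [Fintype ι] [Fintype κ] {u v : (Fin n → ℝ) → ℝ}

lemma Dt_add (hu : ContDiff ℝ j u) (hv : ContDiff ℝ j v) (ξ : Fin n → ℝ) (idx : Fin j → Fin n) :
    Dt n j (fun x => u x + v x) ξ idx = Dt n j u ξ idx + Dt n j v ξ idx := by
  simp [Dt, fun_iteratedFDeriv_add_apply hu.contDiffAt hv.contDiffAt]

lemma Dt_const_mul (hu : ContDiff ℝ j u) (a : ℝ) (ξ : Fin n → ℝ) (idx : Fin j → Fin n) :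
    Dt n j (fun x => a * u x) ξ idx = a * Dt n j u ξ idx := by
  simp [Dt, ← smul_eq_mul, iteratedFDeriv_const_smul_apply' hu.contDiffAt]

lemma Dt_const (hj : j ≠ 0) (a : ℝ) (ξ : Fin n → ℝ) (idx : Fin j → Fin n) :
    Dt n j (fun _ => a) ξ idx = 0 := by
  simp [Dt, iteratedFDeriv_const_of_ne hj]

lemma iteratedFDeriv_single_apply_eq_Dt_s11 {u : (Fin n → ℝ) → ι → ℝ} (hu : ContDiff ℝ j u)
    (ξ : Fin n → ℝ) (idx : Fin j → Fin n) (s : ι) :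
    iteratedFDeriv ℝ j u ξ (fun r => Pi.single (idx r) 1) s = Dt n j (fun x => u x s) ξ idx := by
  have := (ContinuousLinearMap.proj (R := ℝ) (φ := fun _ : ι => ℝ) s).iteratedFDeriv_comp_left
    (hu.contDiffAt (x := ξ)) le_rfl
  simpa [Dt, Function.comp_def] using! congr($this fun r => Pi.single (idx r) 1).symm

theorem Dt_bilinear (B : (ι → ℝ) →L[ℝ] (κ → ℝ) →L[ℝ] ℝ) {u : (Fin n → ℝ) → ι → ℝ}
    {v : (Fin n → ℝ) → κ → ℝ} (hu : ContDiff ℝ j u) (hv : ContDiff ℝ j v) (ξ : Fin n → ℝ)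
    (idx : Fin j → Fin n) :
    Dt n j (fun x => B (u x) (v x)) ξ idx = shuffleSum idx fun i a b =>
      B (fun s => Dt n i (fun x => u x s) ξ a) (fun s => Dt n (j - i) (fun x => v x s) ξ b) := by
  have cast_le {i : ℕ} (hi : i ≤ j) : (i : WithTop ℕ∞) ≤ j := by exact_mod_cast hi
  rw [Dt, iteratedFDeriv_bilinear_eq_shuffleSum B hu hv,
    shuffleSum_map fun a => (Pi.single a 1 : Fin n → ℝ)]
  refine shuffleSum_congr fun i hi a b => ?_
  congr 2 <;> funext s
  · exact iteratedFDeriv_single_apply_eq_Dt_s11 (hu.of_le (cast_le hi)) ξ a s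
  · exact iteratedFDeriv_single_apply_eq_Dt_s11 (hv.of_le (cast_le (j.sub_le i))) ξ b s

lemma Dt_dotProduct {u v : (Fin n → ℝ) → ι → ℝ} (hu : ContDiff ℝ j u) (hv : ContDiff ℝ j v)
    (ξ : Fin n → ℝ) (idx : Fin j → Fin n) :
    Dt n j (fun x => u x ⬝ᵥ v x) ξ idx = shuffleSum idx fun i a b =>
      ∑ s, Dt n i (fun x => u x s) ξ a * Dt n (j - i) (fun x => v x s) ξ b :=
  Dt_bilinear (dotProductBilin ℝ ℝ : (ι → ℝ) →ₗ[ℝ] (ι → ℝ) →ₗ[ℝ] ℝ).toContinuousBilinearMap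
    hu hv ξ idx

lemma Dt_dotProduct_mulVec (A : Matrix ι κ ℝ) {u : (Fin n → ℝ) → ι → ℝ} {v : (Fin n → ℝ) → κ → ℝ}
    (hu : ContDiff ℝ j u) (hv : ContDiff ℝ j v) (ξ : Fin n → ℝ) (idx : Fin j → Fin n) :
    Dt n j (fun x => u x ⬝ᵥ A *ᵥ v x) ξ idx = shuffleSum idx fun i a b =>
      ∑ s, ∑ r, Dt n i (fun x => u x s) ξ a * A s r * Dt n (j - i) (fun x => v x r) ξ b := by
  classical
  have := Dt_bilinear (Matrix.toLinearMap₂' ℝ A).toContinuousBilinearMap hu hv ξ idx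
  simpa [Matrix.toLinearMap₂'_apply', dotProduct, mulVec, Finset.mul_sum, mul_assoc] using this

/-- The gradient `∇u` as the vector of its coordinates. -/
noncomputable def coordGradient (u : (Fin n → ℝ) → ℝ) (x : Fin n → ℝ) : Fin n → ℝ :=
  fun s => Dt n 1 u x fun _ => s

lemma coordGradient_apply (u : (Fin n → ℝ) → ℝ) (x : Fin n → ℝ) (s : Fin n) :
    coordGradient u x s = fderiv ℝ u x (Pi.single s 1) :=
  iteratedFDeriv_one_apply _

lemma contDiff_coordGradient (hu : ContDiff ℝ (j + 1 : ℕ) u) : ContDiff ℝ j (coordGradient u) := by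
  refine contDiff_pi.2 fun s => ?_
  simp only [coordGradient_apply]
  exact (hu.fderiv_right (by norm_cast)).clm_apply contDiff_const

lemma Dt_coordGradient (hu : ContDiff ℝ (j + 1 : ℕ) u) (ξ : Fin n → ℝ) (s : Fin n)
    (idx : Fin j → Fin n) :
    Dt n j (fun x => coordGradient u x s) ξ idx = Dt n (j + 1) u ξ (Fin.cons s idx) := by
  simp only [Dt, coordGradient_apply, iteratedFDeriv_fderiv_apply_eq_cons hu]
  congr 1
  exact funext (Fin.cases rfl fun _ => rfl)

lemma Dt_coordGradient_dotProduct (hu : ContDiff ℝ (j + 1 : ℕ) u) {f : (Fin n → ℝ) → Fin n → ℝ}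
    (hf : ContDiff ℝ j f) (ξ : Fin n → ℝ) (idx : Fin j → Fin n) :
    Dt n j (fun x => coordGradient u x ⬝ᵥ f x) ξ idx = shuffleSum idx fun i a b =>
      ∑ s, Dt n (i + 1) u ξ (Fin.cons s a) * Dt n (j - i) (fun x => f x s) ξ b := by
  rw [Dt_dotProduct (contDiff_coordGradient hu) hf]
  refine shuffleSum_congr fun i hi a b => ?_
  have hui : ContDiff ℝ (i + 1 : ℕ) u := hu.of_le (by exact_mod_cast Nat.add_le_add_right hi 1)
  simp only [Dt_coordGradient hui]

lemma Dt_coordGradient_dotProduct_mulVec (A : Matrix (Fin n) (Fin n) ℝ)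
    (hu : ContDiff ℝ (j + 1 : ℕ) u) (ξ : Fin n → ℝ) (idx : Fin j → Fin n) :
    Dt n j (fun x => coordGradient u x ⬝ᵥ A *ᵥ coordGradient u x) ξ idx =
      shuffleSum idx fun i a b => ∑ s, ∑ r,
        Dt n (i + 1) u ξ (Fin.cons s a) * A s r * Dt n (j - i + 1) u ξ (Fin.cons r b) := by
  rw [Dt_dotProduct_mulVec A (contDiff_coordGradient hu) (contDiff_coordGradient hu)]
  refine shuffleSum_congr fun i hi a b => ?_
  have hui {l : ℕ} (hl : l ≤ j) : ContDiff ℝ (l + 1 : ℕ) u :=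
    hu.of_le (by exact_mod_cast Nat.add_le_add_right hl 1)
  simp only [Dt_coordGradient (hui hi), Dt_coordGradient (hui (j.sub_le i))]

lemma Dt_dotProduct_const {h : (Fin n → ℝ) → ι → ℝ} (hh : ContDiff ℝ j h) (z : ι → ℝ)
    (ξ : Fin n → ℝ) (idx : Fin j → Fin n) :
    Dt n j (fun x => h x ⬝ᵥ z) ξ idx = ∑ s, Dt n j (fun x => h x s) ξ idx * z s := by
  have hhs s : ContDiff ℝ j fun x => z s * h x s := contDiff_const.mul (contDiff_pi.1 hh s)
  simp only [dotProduct, mul_comm _ (z _), ← Dt_const_mul (contDiff_pi.1 hh _)]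
  simp [Dt, iteratedFDeriv_fun_sum_apply fun s _ => (hhs s).contDiffAt]

lemma Dt_sub_dotProduct_mulVec_sub (hj : j ≠ 0) {Q : Matrix ι ι ℝ} (hQ : Q.IsSymm) (y : ι → ℝ)
    {h : (Fin n → ℝ) → ι → ℝ} (hh : ContDiff ℝ j h) (ξ : Fin n → ℝ) (idx : Fin j → Fin n) :
    Dt n j (fun x => (y - h x) ⬝ᵥ Q *ᵥ (y - h x)) ξ idx =
      (shuffleSum idx fun i a b => ∑ s, ∑ r,
        Dt n i (fun x => h x s) ξ a * Q s r * Dt n (j - i) (fun x => h x r) ξ b) +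
      (-2) * ∑ s, Dt n j (fun x => h x s) ξ idx * (Q *ᵥ y) s := by
  have quadratic : ContDiff ℝ j fun x => h x ⬝ᵥ Q *ᵥ h x :=
    contDiff_dotProduct hh (contDiff_mulVec Q hh)
  have linear : ContDiff ℝ j fun x => h x ⬝ᵥ Q *ᵥ y := contDiff_dotProduct hh contDiff_const
  have linear' : ContDiff ℝ j fun x => (-2) * (h x ⬝ᵥ Q *ᵥ y) := contDiff_const.mul linear
  simp only [dotProduct_mulVec_sub_self hQ y]
  rw [Dt_add (quadratic.add linear') contDiff_const, Dt_add quadratic linear', Dt_const_mul linear,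
    Dt_const hj, add_zero, Dt_dotProduct_mulVec Q hh hh, Dt_dotProduct_const hh]

end DerivativeTensor

section HamiltonJacobiBellman

variable {n j : ℕ} {ι κ : Type*} [Fintype ι] [Fintype κ]

/-- The right-hand side `-∇uᵀ f - ½‖Gᵀ∇u‖²_P + ½‖y - h‖²_Q` of the Hamilton–Jacobi–Bellman equation
at a fixed time, with `P` in place of `R⁻¹`. -/
noncomputable def hjbRhs (G : Matrix (Fin n) κ ℝ) (P : Matrix κ κ ℝ) (Q : Matrix ι ι ℝ) (y : ι → ℝ)
    (f : (Fin n → ℝ) → Fin n → ℝ) (h : (Fin n → ℝ) → ι → ℝ) (u : (Fin n → ℝ) → ℝ)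
    (x : Fin n → ℝ) : ℝ :=
  -(coordGradient u x ⬝ᵥ f x) -
    (1 / 2) * ((Gᵀ *ᵥ coordGradient u x) ⬝ᵥ P *ᵥ (Gᵀ *ᵥ coordGradient u x)) +
    (1 / 2) * ((y - h x) ⬝ᵥ Q *ᵥ (y - h x))

/-- The entry at `idx` of the four-term tensor expression for the time derivative of `D^j u`, with
`P` in place of `R⁻¹`. -/
noncomputable def hjbTensorRhs (G : Matrix (Fin n) κ ℝ) (P : Matrix κ κ ℝ) (Q : Matrix ι ι ℝ)
    (y : ι → ℝ) (f : (Fin n → ℝ) → Fin n → ℝ) (h : (Fin n → ℝ) → ι → ℝ) (u : (Fin n → ℝ) → ℝ)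
    (ξ : Fin n → ℝ) (idx : Fin j → Fin n) : ℝ :=
  -(shuffleSum idx fun i a b => ∑ s,
      Dt n (i + 1) u ξ (Fin.cons s a) * Dt n (j - i) (fun x => f x s) ξ b) -
    (1 / 2) * (shuffleSum idx fun i a b => ∑ s, ∑ r,
      Dt n (i + 1) u ξ (Fin.cons s a) * (G * P * Gᵀ) s r * Dt n (j - i + 1) u ξ (Fin.cons r b)) -
    (∑ s, Dt n j (fun x => h x s) ξ idx * (Q *ᵥ y) s) +
    (1 / 2) * (shuffleSum idx fun i a b => ∑ s, ∑ r,
      Dt n i (fun x => h x s) ξ a * Q s r * Dt n (j - i) (fun x => h x r) ξ b)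

theorem Dt_hjbRhs (hj : j ≠ 0) (G : Matrix (Fin n) κ ℝ) (P : Matrix κ κ ℝ) {Q : Matrix ι ι ℝ}
    (hQ : Q.IsSymm) (y : ι → ℝ) {f : (Fin n → ℝ) → Fin n → ℝ} (hf : ContDiff ℝ j f)
    {h : (Fin n → ℝ) → ι → ℝ} (hh : ContDiff ℝ j h) {u : (Fin n → ℝ) → ℝ}
    (hu : ContDiff ℝ (j + 1 : ℕ) u) (ξ : Fin n → ℝ) (idx : Fin j → Fin n) :
    Dt n j (hjbRhs G P Q y f h u) ξ idx = hjbTensorRhs G P Q y f h u ξ idx := by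
  have hgrad := contDiff_coordGradient hu
  have hres : ContDiff ℝ j fun x => y - h x := contDiff_const.sub hh
  have drift : ContDiff ℝ j fun x => coordGradient u x ⬝ᵥ f x := contDiff_dotProduct hgrad hf
  have control : ContDiff ℝ j fun x => coordGradient u x ⬝ᵥ (G * P * Gᵀ) *ᵥ coordGradient u x :=
    contDiff_dotProduct hgrad (contDiff_mulVec _ hgrad)
  have misfit : ContDiff ℝ j fun x => (y - h x) ⬝ᵥ Q *ᵥ (y - h x) :=
    contDiff_dotProduct hres (contDiff_mulVec Q hres)
  have scaled {v : (Fin n → ℝ) → ℝ} (a : ℝ) (hv : ContDiff ℝ j v) : ContDiff ℝ j fun x => a * v x :=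
    contDiff_const.mul hv
  have rhs_eq : hjbRhs G P Q y f h u = fun x => (-1) * (coordGradient u x ⬝ᵥ f x) +
      (-(1 / 2)) * (coordGradient u x ⬝ᵥ (G * P * Gᵀ) *ᵥ coordGradient u x) +
      (1 / 2) * ((y - h x) ⬝ᵥ Q *ᵥ (y - h x)) := by
    funext x
    rw [hjbRhs, transpose_mulVec_dotProduct_mulVec]
    ring
  rw [rhs_eq, Dt_add ((scaled _ drift).add (scaled _ control)) (scaled _ misfit),
    Dt_add (scaled _ drift) (scaled _ control), Dt_const_mul drift, Dt_const_mul control,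
    Dt_const_mul misfit, Dt_coordGradient_dotProduct hu hf, Dt_coordGradient_dotProduct_mulVec _ hu,
    Dt_sub_dotProduct_mulVec_sub hj hQ y hh, hjbTensorRhs]
  ring

theorem hjb_higher_derivative_general (hj : j ≠ 0) (G : Matrix (Fin n) κ ℝ) (P : Matrix κ κ ℝ)
    {Q : Matrix ι ι ℝ} (hQ : Q.IsSymm) (y : ι → ℝ) {f : (Fin n → ℝ) → Fin n → ℝ}
    (hf : ContDiff ℝ j f) {h : (Fin n → ℝ) → ι → ℝ} (hh : ContDiff ℝ j h)
    {V : ℝ → (Fin n → ℝ) → ℝ} {t : ℝ} (hV : ContDiff ℝ (j + 1 : ℕ) (V t))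
    (hHJB : ∀ x, HasDerivAt (fun s => V s x) (hjbRhs G P Q y f h (V t) x) t)
    {ξ : Fin n → ℝ} {idx : Fin j → Fin n}
    (hcomm : HasDerivAt (fun s => Dt n j (V s) ξ idx)
      (Dt n j (fun x => deriv (fun s => V s x) t) ξ idx) t) :
    HasDerivAt (fun s => Dt n j (V s) ξ idx) (hjbTensorRhs G P Q y f h (V t) ξ idx) t := by
  have time_deriv : (fun x => deriv (fun s => V s x) t) = hjbRhs G P Q y f h (V t) :=
    funext fun x => (hHJB x).deriv
  rwa [time_deriv, Dt_hjbRhs hj G P hQ y hf hh hV] at hcomm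

end HamiltonJacobiBellman

/-- higher order derivatives of the HJB equation.
Under the stated regularity assumptions on `f`, `h` and the value function `V`
(with time derivative `Vt = ∂_t V` commuting with the `j`-th spatial derivative),
and the Hamilton–Jacobi–Bellman equation
`∂_t V = −∇Vᵀ f − ½‖Gᵀ∇V‖²_{R⁻¹} + ½‖y − h‖²_Q`, one has, for all
`(t, ξ) ∈ [0,T] × ℝⁿ` and `3 ≤ j ≤ k`,
`∂_t D^j V(t,ξ) = −Σᵢ Sym_{i,j−i}(D^{i+1}V *₁,₁ D^{j−i}f)
  − ½ Σᵢ Sym_{i,j−i}(D^{i+1}V *₁,₁ (GR⁻¹Gᵀ *₂,₁ D^{j−i+1}V))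
  − D^j h *₁,₁ (Q y(t)) + ½ Σᵢ Sym_{i,j−i}(D^i h *₁,₁ (Q *₂,₁ D^{j−i}h))`,
stated entrywise for every multi-index `idx`. -/
theorem hjb_higher_derivative {n m p k j : ℕ} (hj3 : 3 ≤ j) (hjk : j ≤ k)
    (T : ℝ) (hT : 0 < T)
    (G : Matrix (Fin n) (Fin m) ℝ)
    (R : Matrix (Fin m) (Fin m) ℝ) (hR : R.PosDef)
    (Q : Matrix (Fin p) (Fin p) ℝ) (hQ : Q.PosDef)
    (y : ℝ → Fin p → ℝ)
    (f : (Fin n → ℝ) → Fin n → ℝ) (hf : ContDiff ℝ (k : ℕ∞) f)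
    (h : (Fin n → ℝ) → Fin p → ℝ) (hh : ContDiff ℝ (k : ℕ∞) h)
    (V Vt : ℝ → (Fin n → ℝ) → ℝ)
    (hV : ∀ t : ℝ, ContDiff ℝ ((k + 1 : ℕ) : ℕ∞) (V t))
    (hVt : ∀ (t : ℝ) (ξ : Fin n → ℝ), HasDerivAt (fun s => V s ξ) (Vt t ξ) t)
    (hcomm : ∀ (t : ℝ) (ξ : Fin n → ℝ) (idx : Fin j → Fin n),
      HasDerivAt (fun s => Dt n j (V s) ξ idx) (Dt n j (Vt t) ξ idx) t)
    (hHJB : ∀ (t : ℝ) (ξ : Fin n → ℝ),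
      Vt t ξ =
        -(∑ s : Fin n, Dt n 1 (V t) ξ (fun _ => s) * f ξ s) -
          (1 / 2) *
            ((Gᵀ.mulVec fun s => Dt n 1 (V t) ξ fun _ => s) ⬝ᵥ
              R⁻¹.mulVec (Gᵀ.mulVec fun s => Dt n 1 (V t) ξ fun _ => s)) +
          (1 / 2) * ((y t - h ξ) ⬝ᵥ Q.mulVec (y t - h ξ)))
    (t : ℝ) (ht : t ∈ Set.Icc 0 T) (ξ : Fin n → ℝ) (idx : Fin j → Fin n) :
    HasDerivAt (fun s => Dt n j (V s) ξ idx)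
      (-(∑ i : Fin (j + 1), ∑ σ ∈ shuffles j (i : ℕ), ∑ s : Fin n,
            Dt n ((i : ℕ) + 1) (V t) ξ
                (Fin.cons s fun r : Fin (i : ℕ) =>
                  idx (σ (finL (i : ℕ) (by have := i.isLt; omega) r))) *
              Dt n (j - (i : ℕ)) (fun x => f x s) ξ
                (fun r => idx (σ (finR (i : ℕ) (by have := i.isLt; omega) r)))) -
        (1 / 2) *
          (∑ i : Fin (j + 1), ∑ σ ∈ shuffles j (i : ℕ), ∑ s : Fin n, ∑ r : Fin n,
            Dt n ((i : ℕ) + 1) (V t) ξ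
                (Fin.cons s fun a : Fin (i : ℕ) =>
                  idx (σ (finL (i : ℕ) (by have := i.isLt; omega) a))) *
              (G * R⁻¹ * Gᵀ) s r *
              Dt n (j - (i : ℕ) + 1) (V t) ξ
                (Fin.cons r fun a : Fin (j - (i : ℕ)) =>
                  idx (σ (finR (i : ℕ) (by have := i.isLt; omega) a)))) -
        (∑ s : Fin p, Dt n j (fun x => h x s) ξ idx * Q.mulVec (y t) s) +
        (1 / 2) *
          (∑ i : Fin (j + 1), ∑ σ ∈ shuffles j (i : ℕ), ∑ s : Fin p, ∑ r : Fin p,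
            Dt n (i : ℕ) (fun x => h x s) ξ
                (fun a => idx (σ (finL (i : ℕ) (by have := i.isLt; omega) a))) *
              Q s r *
              Dt n (j - (i : ℕ)) (fun x => h x r) ξ
                (fun a => idx (σ (finR (i : ℕ) (by have := i.isLt; omega) a)))))
      t := by
  have time_deriv : Vt t = fun x => deriv (fun s => V s x) t := funext fun x => (hVt t x).deriv.symm
  have symm_Q : Q.IsSymm := (conjTranspose_eq_transpose_of_trivial Q).symm.trans hQ.isHermitian
  exact hjb_higher_derivative_general (by omega) G R⁻¹ symm_Q (y t)
    (hf.of_le (by exact_mod_cast hjk)) (hh.of_le (by exact_mod_cast hjk))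
    ((hV t).of_le (by exact_mod_cast Nat.add_le_add_right hjk 1))
    (fun x => (hVt t x).congr_deriv (hHJB t x)) (time_deriv ▸ hcomm t ξ idx)
end

section
/- Let F: [0,T] → ℝ^{n×n} and H: [0,T] → ℝ^{p×n} be continuous, let G ∈ ℝ^{n×m}, let R ∈ ℝ^{m×m} and Q ∈ ℝ^{p×p} be symmetric positive definite, and let Γ ∈ ℝ^{n×n} be invertible. Suppose Π: [0,T] → ℝ^{n×n} is differentiable, Π(t) is invertible for every t, Π(0) = Γ, and Π′(t) = −F(t)ᵀ Π(t) − Π(t) F(t) − Π(t) G R⁻¹ Gᵀ Π(t) + H(t)ᵀ Q H(t) for all t ∈ [0,T]. Then Σ(t) := Π(t)⁻¹ is differentiable, Σ(0) = Γ⁻¹, and Σ′(t) = F(t) Σ(t) + Σ(t) F(t)ᵀ − Σ(t) H(t)ᵀ Q H(t) Σ(t) + G R⁻¹ Gᵀ for all t ∈ [0,T]. (With F(t) = J_f(x̂(t)) and H(t) = J_h(x̂(t)), this shows that when the third derivative of the value function and the second derivative of h vanish along the observer trajectory, the Riccati-type equation for the Hessian of the value function is equivalent to the covariance equation of the extended Kalman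 filter.) -/
open scoped BigOperators
open Matrix

/-! Differentiating `P P⁻¹ = 1` gives `(P⁻¹)′ = -P⁻¹ P′ P⁻¹`. Multiplying by `P⁻¹` on both sides
turns the term of the Riccati equation that is quadratic in `P` into the constant term of the
equation for `P⁻¹`, and the constant term into the quadratic one. -/

section Ring

variable {A : Type*} [Ring A]

theorem neg_inv_mul_riccati_mul_inv (u : Aˣ) (a b w q : A) :
    -(↑u⁻¹ * (-b * u - u * a - u * w * u + q) * ↑u⁻¹) =
      a * ↑u⁻¹ + ↑u⁻¹ * b - ↑u⁻¹ * q * ↑u⁻¹ + w := by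
  simp only [mul_add, mul_sub, add_mul, sub_mul, neg_mul, mul_neg, mul_assoc, Units.mul_inv,
    Units.inv_mul_cancel_left, mul_one]
  abel

end Ring

section NormedAlgebra

open scoped Ring

variable {𝕜 A : Type*} [NontriviallyNormedField 𝕜] [NormedRing A] [NormedAlgebra 𝕜 A]
  [HasSummableGeomSeries A] {P : 𝕜 → A} {s : Set 𝕜} {t : 𝕜}

theorem hasDerivWithinAt_ringInverse {P' : A} (hP : HasDerivWithinAt P P' s t)
    (hPt : IsUnit (P t)) :
    HasDerivWithinAt (fun τ => (P τ)⁻¹ʳ) (-((P t)⁻¹ʳ * P' * (P t)⁻¹ʳ)) s t := by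
  obtain ⟨u, hu⟩ := hPt
  have hinv : HasFDerivAt Ring.inverse (-ContinuousLinearMap.mulLeftRight 𝕜 A ↑u⁻¹ ↑u⁻¹) (P t) :=
    hu ▸ hasFDerivAt_ringInverse u
  simpa [← hu, Function.comp_def] using hinv.comp_hasDerivWithinAt t hP

theorem hasDerivWithinAt_ringInverse_of_riccati {a b w q : A}
    (hP : HasDerivWithinAt P (-b * P t - P t * a - P t * w * P t + q) s t)
    (hPt : IsUnit (P t)) :
    HasDerivWithinAt (fun τ => (P τ)⁻¹ʳ)
      (a * (P t)⁻¹ʳ + (P t)⁻¹ʳ * b - (P t)⁻¹ʳ * q * (P t)⁻¹ʳ + w) s t := by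
  refine (hasDerivWithinAt_ringInverse hP hPt).congr_deriv ?_
  obtain ⟨u, hu⟩ := hPt
  simpa only [← hu, Ring.inverse_unit] using neg_inv_mul_riccati_mul_inv u a b w q

end NormedAlgebra

section Matrix

variable {𝕜 : Type*} [NontriviallyNormedField 𝕜] {s : Set 𝕜} {t : 𝕜}

theorem hasDerivWithinAt_matrix {m n E : Type*} [Finite m] [Finite n] [NormedAddCommGroup E]
    [NormedSpace 𝕜 E] {P : 𝕜 → Matrix m n E} {P' : Matrix m n E} :
    HasDerivWithinAt P P' s t ↔
      ∀ i j, HasDerivWithinAt (fun τ => P τ i j) (P' i j) s t := by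
  cases nonempty_fintype m
  cases nonempty_fintype n
  exact hasDerivWithinAt_pi.trans (forall_congr' fun _ => hasDerivWithinAt_pi)

open scoped Matrix.Norms.Operator in
theorem riccati_inverse_is_ekf_covariance_general {n K : Type*} [Fintype n] [DecidableEq n]
    [NormedCommRing K] [NormedAlgebra 𝕜 K] [CompleteSpace K] {P : 𝕜 → Matrix n n K}
    {A B W S : Matrix n n K}
    (hP : ∀ i j, HasDerivWithinAt (fun τ => P τ i j)
      ((-B * P t - P t * A - P t * W * P t + S) i j) s t)
    (hPt : IsUnit (P t)) (i j : n) :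
    HasDerivWithinAt (fun τ => (P τ)⁻¹ i j)
      ((A * (P t)⁻¹ + (P t)⁻¹ * B - (P t)⁻¹ * S * (P t)⁻¹ + W) i j) s t := by
  -- The norm uniformity agrees with the entrywise one only after unfolding instances.
  have : @CompleteSpace (Matrix n n K) PseudoMetricSpace.toUniformSpace :=
    Matrix.instCompleteSpace n n K
  have hinv := hasDerivWithinAt_ringInverse_of_riccati (hasDerivWithinAt_matrix.2 hP) hPt
  simp only [← nonsing_inv_eq_ringInverse] at hinv
  exact hasDerivWithinAt_matrix.1 hinv i j

end Matrix

/-- equivalence of the Riccati equation for the Hessian and the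
extended Kalman filter covariance equation. If `Π` solves
`Π′ = −FᵀΠ − ΠF − ΠGR⁻¹GᵀΠ + HᵀQH`, `Π(0) = Γ`, with `Π(t)` invertible on `[0,T]`,
then `Σ := Π⁻¹` is differentiable with `Σ(0) = Γ⁻¹` and
`Σ′ = FΣ + ΣFᵀ − ΣHᵀQHΣ + GR⁻¹Gᵀ` on `[0,T]`. -/
theorem riccati_inverse_is_ekf_covariance {n m p : ℕ} (T : ℝ) (hT : 0 < T)
    (F : ℝ → Matrix (Fin n) (Fin n) ℝ) (H : ℝ → Matrix (Fin p) (Fin n) ℝ)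
    (hF : ∀ a b : Fin n, ContinuousOn (fun t => F t a b) (Set.Icc 0 T))
    (hH : ∀ (a : Fin p) (b : Fin n), ContinuousOn (fun t => H t a b) (Set.Icc 0 T))
    (G : Matrix (Fin n) (Fin m) ℝ)
    (R : Matrix (Fin m) (Fin m) ℝ) (hR : R.PosDef)
    (Q : Matrix (Fin p) (Fin p) ℝ) (hQ : Q.PosDef)
    (Γ : Matrix (Fin n) (Fin n) ℝ) (hΓ : IsUnit Γ)
    (Pm Pm' : ℝ → Matrix (Fin n) (Fin n) ℝ)
    (hPdiff : ∀ t ∈ Set.Icc (0 : ℝ) T, ∀ a b : Fin n,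
      HasDerivAt (fun s => Pm s a b) (Pm' t a b) t)
    (hPinv : ∀ t ∈ Set.Icc (0 : ℝ) T, IsUnit (Pm t))
    (hP0 : Pm 0 = Γ)
    (hODE : ∀ t ∈ Set.Icc (0 : ℝ) T,
      Pm' t =
        -(F t)ᵀ * Pm t - Pm t * F t - Pm t * G * R⁻¹ * Gᵀ * Pm t +
          (H t)ᵀ * Q * H t) :
    (Pm 0)⁻¹ = Γ⁻¹ ∧
      ∀ t ∈ Set.Icc (0 : ℝ) T, ∀ a b : Fin n,
        HasDerivAt (fun s => (Pm s)⁻¹ a b)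
          ((F t * (Pm t)⁻¹ + (Pm t)⁻¹ * (F t)ᵀ -
              (Pm t)⁻¹ * (H t)ᵀ * Q * H t * (Pm t)⁻¹ + G * R⁻¹ * Gᵀ) a b) t := by
  refine ⟨by rw [hP0], fun t ht => ?_⟩
  simpa only [hasDerivWithinAt_univ, Matrix.mul_assoc] using
    riccati_inverse_is_ekf_covariance_general (s := .univ) (W := G * R⁻¹ * Gᵀ)
      (S := (H t)ᵀ * Q * H t) (by simpa [hODE t ht, Matrix.mul_assoc] using hPdiff t ht)
      (hPinv t ht)
end
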